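/- arXiv:1710.06323 — 6 statements merged into one kernel-verified Lean document; each statement's English description precedes it below -/
import Mathlib

section
/- Let q be a prime power, p a monic irreducible polynomial of degree k over F_q, and P ∈ F_q^{k×k} its companion matrix. Fix m ≥ 1 and set n = mk. Then the set S_q(m,k,P) of row spaces of the k×n block matrices (0_{k×k} | … | 0_{k×k} | I_k | B_{i+1} | … | B_m), where i ranges over {1,…,m} and each B_j ∈ F_q[P], is a spread in G_q(k,n): every element is a k-dimensional subspace, any two distinct elements intersect only in 0, and the union of all elements is F_q^n. -/
/-!
Put `K = F[X]/(p)`, a field of degree `k` over `F` with basis `1, α, …, α^(k-1)`, `α` the class of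
`X`. The companion matrix of `p` is the matrix of multiplication by `α` in this basis, so `F[P]` is the image of the
regular representation of `K` (`exists_basis_companion`, `mem_matAlg_iff`). Through it `K` acts on
the row vectors `F^k`, and as `K` is a field with `[K : F] = k`, the orbit map `A ↦ x A` of any
nonzero `x` is a bijection from `F[P]` onto `F^k` (`vecMul_injOn_matAlg`, `exists_vecMul_eq`).
The codewords are therefore the `K`-lines of `(F^k)^m`, with generator normalised so that its first
nonzero block is `I_k`: a nonzero vector `v` determines the position of that block (its first
nonzero block `x`) and then the other blocks `B_j`, the unique elements of `F[P]` with `x B_j = v_j`.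
-/

open Matrix Polynomial

noncomputable section

/-- The companion matrix of a (monic) polynomial `p` of degree `k`:
entries `P (j+1) j = 1` on the subdiagonal, last column `(-p₀, …, -p_{k-1})ᵀ`. -/
def companionMatrix {F : Type*} [Field F] {k : ℕ} (p : Polynomial F) :
    Matrix (Fin k) (Fin k) F :=
  Matrix.of fun i j =>
    if (j : ℕ) = k - 1 then -p.coeff (i : ℕ)
    else if (i : ℕ) = (j : ℕ) + 1 then 1 else 0

/-- `F_q[P] = { Σ_{i<k} vᵢ Pⁱ : vᵢ ∈ F_q }`. -/
def matAlg {F : Type*} [Field F] {k : ℕ} (P : Matrix (Fin k) (Fin k) F) :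
    Set (Matrix (Fin k) (Fin k) F) :=
  { A | ∃ v : Fin k → F, A = ∑ i : Fin k, v i • P ^ (i : ℕ) }

/-- The row space of a matrix: the span of its rows. -/
def rowSpace {F : Type*} [Field F] {ι n : Type*} (M : Matrix ι n F) :
    Submodule F (n → F) :=
  Submodule.span F (Set.range fun i => M i)

/-- `U` is a (reduced row echelon form) basis matrix of a codeword of the
Desarguesian spread `S_q(m,k,P)`, i.e. `U = (0 | … | 0 | I_k | B_{i+1} | … | B_m)`
with all blocks `B_j ∈ F_q[P]`. -/
def IsSpreadMat {F : Type*} [Field F] {k m : ℕ} (P : Matrix (Fin k) (Fin k) F)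
    (U : Matrix (Fin k) (Fin m × Fin k) F) : Prop :=
  ∃ i : Fin m, ∃ B : Fin m → Matrix (Fin k) (Fin k) F,
    (∀ j, j < i → B j = 0) ∧ B i = 1 ∧ (∀ j, i < j → B j ∈ matAlg P) ∧
    U = Matrix.of fun r jc => B jc.1 r jc.2

/-- The Desarguesian spread `S_q(m,k,P)` as a set of subspaces of `F^{mk}`. -/
def desSpread {F : Type*} [Field F] {k m : ℕ} (P : Matrix (Fin k) (Fin k) F) :
    Set (Submodule F (Fin m × Fin k → F)) :=
  { W | ∃ U : Matrix (Fin k) (Fin m × Fin k) F, IsSpreadMat P U ∧ W = rowSpace U }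

/-- `F[X]/(p)` has the basis of powers of the root, in which multiplication by the root is given by
the companion matrix. -/
lemma exists_basis_companion {F : Type*} [Field F] {k : ℕ} (p : Polynomial F) (hmonic : p.Monic)
    (hdeg : p.natDegree = k) :
    ∃ b : Module.Basis (Fin k) F (AdjoinRoot p), (∀ i, b i = AdjoinRoot.root p ^ (i : ℕ)) ∧
      Algebra.leftMulMatrix b (AdjoinRoot.root p) = companionMatrix p := by
  subst hdeg
  refine ⟨(AdjoinRoot.powerBasis hmonic.ne_zero).basis, fun i => ?_, ?_⟩
  · exact (AdjoinRoot.powerBasis hmonic.ne_zero).basis_eq_pow i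
  · have h := (AdjoinRoot.powerBasis hmonic.ne_zero).leftMulMatrix
    rw [AdjoinRoot.powerBasis_gen] at h
    refine h.trans ?_
    ext i j
    have hj : (j : ℕ) < p.natDegree := j.2
    have hd : (AdjoinRoot.powerBasis hmonic.ne_zero).dim = p.natDegree := rfl
    have hiff : ((j : ℕ) + 1 = p.natDegree) ↔ ((j : ℕ) = p.natDegree - 1) := by omega
    simp only [companionMatrix, Matrix.of_apply, PowerBasis.minpolyGen_eq,
      AdjoinRoot.minpoly_powerBasis_gen_of_monic hmonic, hd, hiff]
    rfl

/-- When `1, a, …, a^(k-1)` is a basis of `K`, the polynomials in the matrix of `a` are exactly the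
matrices of the regular representation of `K`. -/
lemma mem_matAlg_iff {F K : Type*} [Field F] [CommRing K] [Algebra F K] {k : ℕ}
    (b : Module.Basis (Fin k) F K) (a : K) (hb : ∀ i, b i = a ^ (i : ℕ))
    (A : Matrix (Fin k) (Fin k) F) :
    A ∈ matAlg (Algebra.leftMulMatrix b a) ↔ ∃ y, A = Algebra.leftMulMatrix b y := by
  constructor
  · rintro ⟨v, rfl⟩
    exact ⟨∑ i, v i • a ^ (i : ℕ), by simp⟩
  · rintro ⟨y, rfl⟩
    refine ⟨b.repr y, ?_⟩
    conv_lhs => rw [← b.sum_repr y]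
    simp [hb]

/-- Nonzero elements of a field act invertibly in the regular representation, so they kill no
nonzero row vector. -/
lemma eq_zero_of_vecMul_leftMulMatrix {F K : Type*} [Field F] [Field K] [Algebra F K] {k : ℕ}
    (b : Module.Basis (Fin k) F K) {x : Fin k → F} (hx : x ≠ 0) {y : K}
    (h : x ᵥ* Algebra.leftMulMatrix b y = 0) : y = 0 := by
  by_contra hy
  apply hx
  calc x = x ᵥ* Algebra.leftMulMatrix b (y * y⁻¹) := by rw [mul_inv_cancel₀ hy]; simp
    _ = 0 := by rw [map_mul, ← Matrix.vecMul_vecMul, h, Matrix.zero_vecMul]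

section Companion

variable {F : Type*} [Field F] {k : ℕ} {p : Polynomial F}

lemma vecMul_injOn_matAlg (hmonic : p.Monic) (hirr : Irreducible p) (hdeg : p.natDegree = k)
    {x : Fin k → F} (hx : x ≠ 0) :
    Set.InjOn (fun A => x ᵥ* A) (matAlg (companionMatrix (k := k) p)) := by
  have := Fact.mk hirr
  obtain ⟨b, hb, hP⟩ := exists_basis_companion p hmonic hdeg
  intro A hA A' hA' h
  rw [← hP, mem_matAlg_iff b _ hb] at hA hA'
  obtain ⟨y, rfl⟩ := hA
  obtain ⟨y', rfl⟩ := hA'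
  have : y - y' = 0 := eq_zero_of_vecMul_leftMulMatrix b hx (by
    rw [map_sub, Matrix.vecMul_sub, sub_eq_zero]; exact h)
  rw [sub_eq_zero.1 this]

lemma exists_vecMul_eq (hmonic : p.Monic) (hirr : Irreducible p) (hdeg : p.natDegree = k)
    {x : Fin k → F} (hx : x ≠ 0) (w : Fin k → F) :
    ∃ A ∈ matAlg (companionMatrix (k := k) p), x ᵥ* A = w := by
  have := Fact.mk hirr
  obtain ⟨b, hb, hP⟩ := exists_basis_companion p hmonic hdeg
  have : Module.Finite F (AdjoinRoot p) := Module.Finite.of_basis b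
  let f : AdjoinRoot p →ₗ[F] (Fin k → F) :=
    { toFun := fun y => x ᵥ* Algebra.leftMulMatrix b y
      map_add' := fun y z => by rw [map_add, Matrix.vecMul_add]
      map_smul' := fun c y => by rw [map_smul, Matrix.vecMul_smul]; rfl }
  have hinj : Function.Injective f :=
    (injective_iff_map_eq_zero f).2 fun y hy => eq_zero_of_vecMul_leftMulMatrix b hx hy
  -- both sides have `F`-dimension `k`, so injectivity gives surjectivity
  have hsurj : Function.Surjective f :=
    (LinearMap.injective_iff_surjective_of_finrank_eq_finrank
      (by rw [Module.finrank_eq_card_basis b]; simp)).1 hinj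
  obtain ⟨y, hy⟩ := hsurj w
  exact ⟨_, hP ▸ (mem_matAlg_iff b _ hb _).2 ⟨y, rfl⟩, hy⟩

end Companion

lemma zero_mem_matAlg {F : Type*} [Field F] {k : ℕ} (P : Matrix (Fin k) (Fin k) F) :
    (0 : Matrix (Fin k) (Fin k) F) ∈ matAlg P :=
  ⟨0, by simp⟩

/-- The row space of a block row `(B_1 | … | B_m)` consists of the vectors `(x B_1, …, x B_m)`. -/
lemma mem_rowSpace_blocks {F : Type*} [Field F] {k m : ℕ} (B : Fin m → Matrix (Fin k) (Fin k) F)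
    (v : Fin m × Fin k → F) :
    v ∈ rowSpace (Matrix.of fun r (jc : Fin m × Fin k) => B jc.1 r jc.2) ↔
      ∃ x : Fin k → F, ∀ j, x ᵥ* B j = fun c => v (j, c) := by
  rw [rowSpace, Submodule.mem_span_range_iff_exists_fun]
  refine exists_congr fun x => ⟨fun h j => ?_, fun h => ?_⟩
  · ext c
    simpa [Matrix.vecMul, dotProduct] using congrFun h (j, c)
  · ext ⟨j, c⟩
    simpa [Matrix.vecMul, dotProduct] using congrFun (h j) c

/-- The leading block `I_k` makes the rows of a spread matrix linearly independent. -/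
lemma finrank_rowSpace_blocks {F : Type*} [Field F] {k m : ℕ}
    (B : Fin m → Matrix (Fin k) (Fin k) F) (i : Fin m) (hi : B i = 1) :
    Module.finrank F (rowSpace (Matrix.of fun r (jc : Fin m × Fin k) => B jc.1 r jc.2)) = k := by
  have hli : LinearIndependent F
      fun r => (Matrix.of fun r (jc : Fin m × Fin k) => B jc.1 r jc.2) r := by
    rw [Fintype.linearIndependent_iff]
    intro g hg r
    simpa [hi, Matrix.one_apply] using congrFun hg (i, r)
  rw [rowSpace, finrank_span_eq_card hli, Fintype.card_fin]

/-- The Desarguesian construction `S_q(m,k,P)` (row spaces of the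
block matrices `(0 | … | 0 | I_k | B_{i+1} | … | B_m)` with blocks in `F_q[P]`,
`P` the companion matrix of a monic irreducible polynomial of degree `k`) is a
spread in `G_q(k, mk)`: every element is a `k`-dimensional subspace, distinct
elements intersect trivially, and the union of all elements is the whole space. -/
theorem desSpread_isSpread (F : Type*) [Field F] (k m : ℕ) (hm : 1 ≤ m)
    (p : Polynomial F) (hmonic : p.Monic) (hirr : Irreducible p)
    (hdeg : p.natDegree = k) :
    (∀ W ∈ desSpread (m := m) (companionMatrix (k := k) p), Module.finrank F W = k) ∧
    (∀ W ∈ desSpread (m := m) (companionMatrix (k := k) p),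
      ∀ W' ∈ desSpread (m := m) (companionMatrix (k := k) p), W ≠ W' → W ⊓ W' = ⊥) ∧
    (∀ v : Fin m × Fin k → F, ∃ W ∈ desSpread (m := m) (companionMatrix (k := k) p), v ∈ W) := by
  refine ⟨?_, ?_, ?_⟩
  · rintro W ⟨U, ⟨i, B, -, hi, -, rfl⟩, rfl⟩
    exact finrank_rowSpace_blocks B i hi
  · rintro W ⟨U, ⟨i, B, hlt, hi, hgt, rfl⟩, rfl⟩ W' ⟨U', ⟨i', B', hlt', hi', hgt', rfl⟩, rfl⟩ hne
    rw [Submodule.eq_bot_iff]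
    rintro v ⟨hv, hv'⟩
    obtain ⟨x, hx⟩ := (mem_rowSpace_blocks B v).1 hv
    obtain ⟨x', hx'⟩ := (mem_rowSpace_blocks B' v).1 hv'
    by_contra hv0
    apply hne
    have hx0 : x ≠ 0 := by
      rintro rfl
      exact hv0 (funext fun ⟨j, c⟩ => by simpa using (congrFun (hx j) c).symm)
    have hx0' : x' ≠ 0 := by
      rintro rfl
      exact hv0 (funext fun ⟨j, c⟩ => by simpa using (congrFun (hx' j) c).symm)
    have hxx (j) : x ᵥ* B j = x' ᵥ* B' j := (hx j).trans (hx' j).symm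
    -- both leading positions are the index of the first nonzero block of `v`
    have hii : i = i' := by
      rcases lt_trichotomy i i' with h | h | h
      · exact absurd (by simpa [hi, hlt' i h] using hxx i) hx0
      · exact h
      · exact absurd (by simpa [hi', hlt i' h] using (hxx i').symm) hx0'
    subst hii
    have hxeq : x = x' := by simpa [hi, hi'] using hxx i
    subst hxeq
    have hB : B = B' := by
      funext j
      rcases lt_trichotomy j i with h | h | h
      · rw [hlt j h, hlt' j h]
      · rw [h, hi, hi']
      · exact vecMul_injOn_matAlg hmonic hirr hdeg hx0 (hgt j h) (hgt' j h) (hxx j)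
    rw [hB]
  · intro v
    by_cases hv : ∃ j, (fun c => v (j, c)) ≠ 0
    · obtain ⟨i, hi, hmin⟩ := WellFounded.has_min (wellFounded_lt (α := Fin m))
        {j | (fun c => v (j, c)) ≠ 0} hv
      choose A hA hAv using fun j => exists_vecMul_eq hmonic hirr hdeg hi fun c => v (j, c)
      let B : Fin m → Matrix (Fin k) (Fin k) F :=
        fun j => if j < i then 0 else if j = i then 1 else A j
      refine ⟨_, ⟨_, ⟨i, B, fun j h => ?_, ?_, fun j h => ?_, rfl⟩, rfl⟩,
        (mem_rowSpace_blocks B v).2 ⟨fun c => v (i, c), fun j => ?_⟩⟩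
      · simp [B, h]
      · simp [B]
      · simpa [B, h.not_gt, h.ne'] using hA j
      · rcases lt_trichotomy j i with h | h | h
        · have h0 : (fun c => v (j, c)) = 0 := by
            by_contra hj
            exact hmin j hj h
          simp [B, h, h0]
        · simp [B, h]
        · simpa [B, h.not_gt, h.ne'] using hAv j
    · push Not at hv
      -- the zero vector lies in every codeword
      let i : Fin m := ⟨0, hm⟩
      let B : Fin m → Matrix (Fin k) (Fin k) F := fun j => if j = i then 1 else 0
      refine ⟨_, ⟨_, ⟨i, B, fun j h => ?_, ?_, fun j h => ?_, rfl⟩, rfl⟩,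
        (mem_rowSpace_blocks B v).2 ⟨0, fun j => by simp [hv j]⟩⟩
      · simp [B, h.ne]
      · simp [B]
      · simpa [B, h.ne'] using zero_mem_matAlg _

end
end

section
/- Let q be a prime power, p a monic irreducible polynomial of degree k over F_q, P its companion matrix, and α the residue class of x in the field K = F_q[x]/(p) (so p(α) = 0 and K is a field with q^k elements). Then the image of F_q[P^T] under the row-wise map ψ̄ equals the set of K-scalar multiples of the vector (1, α, α^2, …, α^{k−1}) ∈ K^k; that is, ψ̄(F_q[P^T]) = { c·(1, α, …, α^{k−1}) : c ∈ K }. (This is the Gabidulin code of length k and K-dimension 1 with generator matrix G = (1 α … α^{k−1}), which has minimum rank distance k.) -/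
/-!
Write `w = (1, α, …, α^{k-1})`. The map `ψ̄` is `A ↦ A w`, with `A` read over `K`. Row `i < k - 1` of
`Pᵀ` is the unit vector at `i + 1`, and its last row is `(-p₀, …, -p_{k-1})`, so `p(α) = 0` says
exactly that `w` is an eigenvector of `Pᵀ` with eigenvalue `α` (`companion_transpose_mulVec`).
Hence `ψ̄(∑ vᵢ (Pᵀ)ⁱ) = (∑ vᵢ αⁱ) w` (`sum_smul_pow_mulVec`), and the coefficients `∑ vᵢ αⁱ` exhaust
`K` because `1, α, …, α^{k-1}` is an `F`-basis of `K` (`exists_sum_root_pow`).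
-/

open Matrix Polynomial

noncomputable section

section

variable {F : Type*} [Field F] {k : ℕ} {p : Polynomial F}

/-- The vector `(1, α, …, α^{k-1})` over `K = F[x]/(p)`. -/
def rootVec (k : ℕ) (p : Polynomial F) : Fin k → AdjoinRoot p :=
  fun i => AdjoinRoot.root p ^ (i : ℕ)

theorem root_pow_natDegree (hmonic : p.Monic) (hdeg : p.natDegree = k) :
    AdjoinRoot.root p ^ k =
      -∑ j : Fin k, algebraMap F (AdjoinRoot p) (p.coeff j) * AdjoinRoot.root p ^ (j : ℕ) := by
  have h := AdjoinRoot.eval₂_root p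
  rw [eval₂_eq_sum_range, Finset.sum_range_succ, hmonic.coeff_natDegree, map_one, one_mul,
    hdeg, ← Fin.sum_univ_eq_sum_range
      (fun j => AdjoinRoot.of p (p.coeff j) * AdjoinRoot.root p ^ j)] at h
  rw [AdjoinRoot.algebraMap_eq]
  exact eq_neg_of_add_eq_zero_right h

theorem companion_transpose_mulVec (hmonic : p.Monic) (hdeg : p.natDegree = k) :
    (companionMatrix (k := k) p)ᵀ.map (algebraMap F (AdjoinRoot p)) *ᵥ rootVec k p =
      AdjoinRoot.root p • rootVec k p := by
  ext i
  simp only [mulVec, dotProduct, map_apply, transpose_apply, companionMatrix, of_apply, rootVec,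
    Pi.smul_apply, smul_eq_mul, ← pow_succ']
  by_cases hi : (i : ℕ) = k - 1
  · have hik : (i : ℕ) + 1 = k := by omega
    simp only [hi, if_true, map_neg, neg_mul, Finset.sum_neg_distrib]
    rw [← hi, hik, root_pow_natDegree hmonic hdeg]
  · have hik : (i : ℕ) + 1 < k := by omega
    rw [Finset.sum_eq_single ⟨(i : ℕ) + 1, hik⟩]
    · simp [hi]
    · intro j _ hj
      have : (j : ℕ) ≠ i + 1 := fun h => hj (Fin.ext h)
      simp [hi, this]
    · simp

theorem map_pow_mulVec_of_eigen {K : Type*} [CommRing K] [Algebra F K]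
    {A : Matrix (Fin k) (Fin k) F} {w : Fin k → K} {a : K}
    (h : A.map (algebraMap F K) *ᵥ w = a • w) (n : ℕ) :
    (A ^ n).map (algebraMap F K) *ᵥ w = a ^ n • w := by
  induction n with
  | zero => simp
  | succ n ih =>
    rw [pow_succ, Matrix.map_mul, ← mulVec_mulVec, h, mulVec_smul, ih, smul_smul, pow_succ']

theorem exists_sum_root_pow (hmonic : p.Monic) (hdeg : p.natDegree = k) (c : AdjoinRoot p) :
    ∃ v : Fin k → F,
      ∑ i : Fin k, algebraMap F (AdjoinRoot p) (v i) * AdjoinRoot.root p ^ (i : ℕ) = c := by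
  subst hdeg
  let B := AdjoinRoot.powerBasis' hmonic
  refine ⟨B.basis.repr c, ?_⟩
  conv_rhs => rw [← B.basis.sum_repr c]
  refine Finset.sum_congr rfl fun i _ => ?_
  exact ((Algebra.smul_def _ _).trans (congrArg _ (B.basis_eq_pow i))).symm

theorem sum_smul_pow_mulVec (hmonic : p.Monic) (hdeg : p.natDegree = k) (v : Fin k → F) :
    (∑ i : Fin k, v i • (companionMatrix (k := k) p)ᵀ ^ (i : ℕ)).map
        (algebraMap F (AdjoinRoot p)) *ᵥ rootVec k p =
      (∑ i : Fin k, algebraMap F (AdjoinRoot p) (v i) * AdjoinRoot.root p ^ (i : ℕ)) •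
        rootVec k p := by
  have hsum := map_sum (algebraMap F (AdjoinRoot p)).mapMatrix
    (fun i : Fin k => v i • (companionMatrix (k := k) p)ᵀ ^ (i : ℕ)) Finset.univ
  simp only [RingHom.mapMatrix_apply] at hsum
  rw [hsum, sum_mulVec, Finset.sum_smul]
  refine Finset.sum_congr rfl fun i _ => ?_
  rw [Matrix.map_smul' _ _ _ (by simp), smul_mulVec,
    map_pow_mulVec_of_eigen (companion_transpose_mulVec hmonic hdeg), smul_smul]

end

/-- With `K = F_q[x]/(p)`, `α` the class of `x`, and `ψ̄` the
row-wise map sending a row `(v₀,…,v_{k-1})` to `Σ vᵢ αⁱ`, the image of `F_q[Pᵀ]`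
under `ψ̄` is the set of `K`-scalar multiples of `(1, α, …, α^{k-1})`, i.e. the
Gabidulin code of length `k` and `K`-dimension 1 generated by `(1 α … α^{k-1})`. -/
theorem matAlg_transpose_is_gabidulin (F : Type*) [Field F] (k : ℕ) (hk : 1 ≤ k)
    (p : Polynomial F) (hmonic : p.Monic) (hirr : Irreducible p)
    (hdeg : p.natDegree = k) :
    (fun A : Matrix (Fin k) (Fin k) F => fun i : Fin k =>
        ∑ j : Fin k, algebraMap F (AdjoinRoot p) (A i j) * AdjoinRoot.root p ^ (j : ℕ)) ''
      matAlg (companionMatrix (k := k) p)ᵀ =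
    Set.range (fun c : AdjoinRoot p => fun i : Fin k => c * AdjoinRoot.root p ^ (i : ℕ)) := by
  ext x
  constructor
  · rintro ⟨A, ⟨v, rfl⟩, rfl⟩
    exact ⟨_, (sum_smul_pow_mulVec hmonic hdeg v).symm⟩
  · rintro ⟨c, rfl⟩
    obtain ⟨v, rfl⟩ := exists_sum_root_pow hmonic hdeg c
    exact ⟨_, ⟨v, rfl⟩, sum_smul_pow_mulVec hmonic hdeg v⟩


end
end

section
/- Let q be a prime power, p a monic irreducible polynomial of degree k over F_q, and P its companion matrix. Let r ∈ {0,…,k−1}, let R be any set of r row indices and S any set of at most k−r−1 column indices in {1,…,k}. If A_1, A_2 ∈ F_q[P] satisfy (A_1)_{ij} = (A_2)_{ij} for all i ∉ R and all j ∉ S, then A_1 = A_2; the same statement holds with F_q[P] replaced by F_q[P^T]. (That is, the rank-metric codes F_q[P] and F_q[P^T] can decode any r row erasures and k−r−1 column erasures.) -/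
/-! Every nonzero element of `F[P]` is invertible: since `p(P) = 0` and `p` is irreducible, a nonzero
polynomial of degree below `k` has an inverse modulo `p`, which evaluates to an inverse matrix
(`aeval_companionMatrix`, `matAlg_eq_zero_or_det_ne_zero`). The same holds for `Pᵀ`, as
`p(Pᵀ) = p(P)ᵀ = 0`. The difference of two codewords agreeing outside `r` rows and at most `k-r-1`
columns has at least `r+1` columns supported in `r` rows, hence is singular
(`det_eq_zero_of_zero_block`). Lying in the algebra, it must be zero. -/

open Matrix Polynomial

noncomputable section

/-- The companion matrix shifts the standard basis, so its powers carry the first basis vector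
through all the others. -/
lemma companion_pow_mulVec_single {F : Type*} [Field F] {k : ℕ} (p : Polynomial F) (hk : 0 < k)
    (i : ℕ) (hi : i < k) :
    (companionMatrix (k := k) p ^ i) *ᵥ Pi.single ⟨0, hk⟩ 1 = Pi.single ⟨i, hi⟩ 1 := by
  induction i with
  | zero => rw [pow_zero, Matrix.one_mulVec]
  | succ n ih =>
    rw [pow_succ', ← Matrix.mulVec_mulVec, ih (by omega)]
    ext j
    have hn : n ≠ k - 1 := by omega
    simp [companionMatrix, Pi.single_apply, Fin.ext_iff, hn]

/-- A monic polynomial annihilates its companion matrix: `p(P)` kills the cyclic vector `e₀`, and it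
commutes with the powers of `P`, which produce every basis vector from `e₀`. -/
lemma aeval_companionMatrix {F : Type*} [Field F] {k : ℕ} (p : Polynomial F) (hk : 0 < k)
    (hmonic : p.Monic) (hdeg : p.natDegree = k) :
    aeval (companionMatrix (k := k) p) p = 0 := by
  set P := companionMatrix (k := k) p with hP
  have h0 : aeval P p *ᵥ Pi.single ⟨0, hk⟩ 1 = 0 := by
    rw [aeval_eq_sum_range, hdeg, Finset.sum_range_succ, Matrix.add_mulVec, Matrix.sum_mulVec]
    have hlast : P ^ k *ᵥ Pi.single ⟨0, hk⟩ 1 = fun i : Fin k => -p.coeff i := by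
      obtain ⟨n, rfl⟩ : ∃ n, k = n + 1 := ⟨k - 1, by omega⟩
      rw [pow_succ', ← Matrix.mulVec_mulVec, companion_pow_mulVec_single p hk n (by omega)]
      ext j
      simp [hP, companionMatrix]
    have hc : p.coeff k = 1 := by rw [← hdeg]; exact hmonic
    rw [Matrix.smul_mulVec, hlast, hc, one_smul, Finset.sum_range]
    simp_rw [Matrix.smul_mulVec, hP, companion_pow_mulVec_single p hk _ (Fin.is_lt _)]
    ext j
    simp [Finset.sum_apply, Pi.single_apply]
  refine Matrix.ext_of_mulVec_single fun i => ?_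
  have hcomm : aeval P p * P ^ (i : ℕ) = P ^ (i : ℕ) * aeval P p := by
    have : P ^ (i : ℕ) = aeval P (X ^ (i : ℕ) : F[X]) := by simp
    rw [this, ← map_mul, ← map_mul, mul_comm]
  have hi := companion_pow_mulVec_single p hk i i.is_lt
  rw [Fin.eta] at hi
  rw [← hi, Matrix.mulVec_mulVec, ← hP, hcomm, ← Matrix.mulVec_mulVec, h0]
  simp

/-- If `Q` is a root of an irreducible `p`, every nonzero polynomial of degree below `deg p` is
coprime to `p`, so its value at `Q` is invertible. -/
lemma matAlg_eq_zero_or_det_ne_zero {F : Type*} [Field F] {k : ℕ} {p : Polynomial F}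
    (hirr : Irreducible p) (hdeg : p.natDegree = k) {Q : Matrix (Fin k) (Fin k) F}
    (hQ : aeval Q p = 0) {A : Matrix (Fin k) (Fin k) F} (hA : A ∈ matAlg Q) :
    A = 0 ∨ A.det ≠ 0 := by
  obtain ⟨v, rfl⟩ := hA
  set f : F[X] := ∑ i : Fin k, C (v i) * X ^ (i : ℕ) with hf
  have hfQ : ∑ i : Fin k, v i • Q ^ (i : ℕ) = aeval Q f := by
    simp [hf, map_sum, Algebra.smul_def]
  rw [hfQ]
  by_cases hf0 : f = 0
  · left; simp [hf0]
  right
  have hlt : f.degree < p.degree := by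
    rw [degree_eq_natDegree hirr.ne_zero, hdeg]
    exact degree_sum_fin_lt v
  have hcop : IsCoprime p f :=
    hirr.coprime_iff_not_dvd.2 fun h => hf0 (eq_zero_of_dvd_of_degree_lt h hlt)
  obtain ⟨a, b, hab⟩ := hcop
  have h1 : aeval Q b * aeval Q f = 1 := by
    have := congrArg (aeval Q) hab
    simpa [hQ] using this
  have hdet := congrArg Matrix.det h1
  rw [Matrix.det_mul, Matrix.det_one] at hdet
  exact right_ne_zero_of_mul_eq_one hdet

/-- A matrix whose columns outside `S` are supported in the rows `R` is singular as soon as there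
are more such columns than rows in `R`. -/
lemma det_eq_zero_of_zero_block {F : Type*} [Field F] {k : ℕ} (A : Matrix (Fin k) (Fin k) F)
    (R S : Finset (Fin k)) (hcard : R.card + S.card < k)
    (h : ∀ i ∉ R, ∀ j ∉ S, A i j = 0) : A.det = 0 := by
  classical
  have hdim : Module.finrank F ({i // i ∈ R} → F) < Module.finrank F ({j // j ∈ Sᶜ} → F) := by
    simp only [Module.finrank_fintype_fun_eq_card, Fintype.card_coe, Finset.card_compl,
      Fintype.card_fin]
    omega
  let B : Matrix {i // i ∈ R} {j // j ∈ Sᶜ} F := A.submatrix (fun i => i.1) (fun j => j.1)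
  obtain ⟨u, hu, hu0⟩ := Submodule.exists_mem_ne_zero_of_ne_bot
    (LinearMap.ker_ne_bot_of_finrank_lt (f := B.mulVecLin) hdim)
  -- Extension of the kernel vector `u` by zero on the columns in `S`.
  let w : Fin k → F := fun j => if hj : j ∈ Sᶜ then u ⟨j, hj⟩ else 0
  have hw : ∀ j : {j // j ∈ Sᶜ}, w j.1 = u j := fun j => dif_pos j.2
  refine Matrix.exists_mulVec_eq_zero_iff.1 ⟨w, fun hw0 => hu0 ?_, ?_⟩
  · ext j
    rw [← hw, hw0]; rfl
  · ext i
    have hsum : (A *ᵥ w) i = ∑ j : {j // j ∈ Sᶜ}, A i j.1 * u j := by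
      have h2 : ∑ j ∈ Sᶜ, A i j * w j = ∑ j, A i j * w j := by
        refine Finset.sum_subset (Finset.subset_univ _) fun j _ hj => ?_
        simp only [w, dif_neg hj, mul_zero]
      rw [Matrix.mulVec, dotProduct, ← h2, ← Finset.sum_coe_sort]
      simp_rw [hw]
    rw [hsum, Pi.zero_apply]
    by_cases hi : i ∈ R
    · exact congrFun (LinearMap.mem_ker.1 hu) ⟨i, hi⟩
    · refine Finset.sum_eq_zero fun j _ => ?_
      rw [h i hi j.1 (Finset.mem_compl.1 j.2), zero_mul]

lemma matAlg_sub_mem {F : Type*} [Field F] {k : ℕ} {Q A₁ A₂ : Matrix (Fin k) (Fin k) F}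
    (h₁ : A₁ ∈ matAlg Q) (h₂ : A₂ ∈ matAlg Q) : A₁ - A₂ ∈ matAlg Q := by
  obtain ⟨v, rfl⟩ := h₁
  obtain ⟨w, rfl⟩ := h₂
  exact ⟨v - w, by simp [sub_smul]⟩

lemma aeval_transpose_matrix {F : Type*} [Field F] {k : ℕ} (Q : Matrix (Fin k) (Fin k) F)
    (p : Polynomial F) : aeval Qᵀ p = (aeval Q p)ᵀ := by
  simp [aeval_eq_sum_range, Matrix.transpose_sum, Matrix.transpose_pow]

/-- The rank-metric codes `F_q[P]` and `F_q[Pᵀ]` (for `P` the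
companion matrix of a monic irreducible polynomial of degree `k`) can decode any
`r` row erasures and `k-r-1` column erasures: two codewords agreeing outside `r`
given rows and at most `k-r-1` given columns are equal. -/
theorem matAlg_erasure_correction (F : Type*) [Field F] (k r : ℕ) (hr : r < k)
    (p : Polynomial F) (hmonic : p.Monic) (hirr : Irreducible p)
    (hdeg : p.natDegree = k)
    (R : Finset (Fin k)) (S : Finset (Fin k))
    (hR : R.card = r) (hS : S.card ≤ k - r - 1) :
    (∀ A₁ ∈ matAlg (companionMatrix (k := k) p),
      ∀ A₂ ∈ matAlg (companionMatrix (k := k) p),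
        (∀ i ∉ R, ∀ j ∉ S, A₁ i j = A₂ i j) → A₁ = A₂) ∧
    (∀ A₁ ∈ matAlg (companionMatrix (k := k) p)ᵀ,
      ∀ A₂ ∈ matAlg (companionMatrix (k := k) p)ᵀ,
        (∀ i ∉ R, ∀ j ∉ S, A₁ i j = A₂ i j) → A₁ = A₂) := by
  have hPp := aeval_companionMatrix p (by omega) hmonic hdeg
  have key : ∀ Q : Matrix (Fin k) (Fin k) F, aeval Q p = 0 →
      ∀ A₁ ∈ matAlg Q, ∀ A₂ ∈ matAlg Q,
        (∀ i ∉ R, ∀ j ∉ S, A₁ i j = A₂ i j) → A₁ = A₂ := by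
    intro Q hQ A₁ h₁ A₂ h₂ h
    refine sub_eq_zero.1 ((matAlg_eq_zero_or_det_ne_zero hirr hdeg hQ
      (matAlg_sub_mem h₁ h₂)).resolve_right (not_not.2 ?_))
    refine det_eq_zero_of_zero_block _ R S (by omega) fun i hi j hj => ?_
    rw [Matrix.sub_apply, h i hi j hj, sub_self]
  exact ⟨key _ hPp, key _ (by rw [aeval_transpose_matrix, hPp, Matrix.transpose_zero])⟩

end
end

section
/- Let C be a spread in G_q(k,n), let U ∈ C be a codeword with basis matrix M ∈ F_q^{k×n} (so the rows of M span U), let A ∈ GL_k(F_q), and let E ⊆ {1,…,k}×{1,…,n} be a set of erased positions with |E| ≤ k−1. Let I be the set of row indices i such that no position (i,j) lies in E. Then I is nonempty, every row of AM with index in I lies in U, and U is the unique element of C that contains all rows of AM with indices in I. (That is, in the row erasure channel a spread code can correct any erasure pattern with at most k−1 erased symbols.) -/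
/-!
Fewer than `k` positions are erased, so some row `i` of `A * M` survives. Every row of `A * M` is a
combination of rows of `M`, so it lies in `U`. It is moreover nonzero: the rows of `M` are
independent (`vecMul_injective_of_finrank_rowSpace`) and no row of the invertible matrix `A`
vanishes. Distinct spread elements meet only in `0`, so the single vector `(A * M) i` already
determines `U`.
-/

noncomputable section

/-- A basis matrix acts injectively on coefficient vectors: its `k` rows span a space of
dimension `k`, hence are independent. -/
theorem vecMul_injective_of_finrank_rowSpace {F : Type*} [Field F] {k n : ℕ}
    (M : Matrix (Fin k) (Fin n) F) (h : Module.finrank F (rowSpace M) = k) :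
    Function.Injective M.vecMul := by
  rw [Matrix.vecMul_injective_iff, linearIndependent_iff_card_eq_finrank_span, Fintype.card_fin]
  exact h.symm

theorem vecMul_mem_rowSpace {F : Type*} [Field F] {k n : ℕ}
    (M : Matrix (Fin k) (Fin n) F) (v : Fin k → F) : Matrix.vecMul v M ∈ rowSpace M := by
  rw [Matrix.vecMul_eq_sum]
  exact Submodule.sum_mem _ fun i _ =>
    Submodule.smul_mem _ _ (Submodule.subset_span ⟨i, rfl⟩)

/-- Let `C` be a spread in `G_q(k,n)`, `U ∈ C` with basis matrix
`M`, `A` invertible, and `E` a set of at most `k-1` erased positions. Let `I` be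
the set of rows without erasures. Then `I` is nonempty, every row of `A·M` with
index in `I` lies in `U`, and `U` is the unique element of `C` containing all
those rows: a spread corrects any pattern of at most `k-1` symbol erasures in
the row erasure channel. -/
theorem spread_REC_correction (F : Type*) [Field F] (k n : ℕ) (hk : 1 ≤ k)
    (C : Set (Submodule F (Fin n → F)))
    (hdim : ∀ W ∈ C, Module.finrank F W = k)
    (hint : ∀ W ∈ C, ∀ W' ∈ C, W ≠ W' → W ⊓ W' = ⊥)
    (hcov : ∀ v : Fin n → F, ∃ W ∈ C, v ∈ W)
    (U : Submodule F (Fin n → F)) (hU : U ∈ C)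
    (M : Matrix (Fin k) (Fin n) F) (hM : rowSpace M = U)
    (A : Matrix (Fin k) (Fin k) F) (hA : IsUnit A)
    (E : Finset (Fin k × Fin n)) (hE : E.card ≤ k - 1)
    (I : Set (Fin k)) (hI : I = {i | ∀ j : Fin n, (i, j) ∉ E}) :
    I.Nonempty ∧ (∀ i ∈ I, (A * M) i ∈ U) ∧
      (∀ W ∈ C, (∀ i ∈ I, (A * M) i ∈ W) → W = U) := by
  classical
  have hrow : ∀ i, (A * M) i = Matrix.vecMul (A i) M := fun i => rfl
  have hinj := vecMul_injective_of_finrank_rowSpace M (hM ▸ hdim U hU)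
  have hmem : ∀ i, (A * M) i ∈ U := fun i => by
    rw [hrow, ← hM]
    exact vecMul_mem_rowSpace M (A i)
  have hne : ∀ i, (A * M) i ≠ 0 := fun i h0 => by
    rw [hrow, ← Matrix.zero_vecMul M] at h0
    have hdet := (Matrix.isUnit_iff_isUnit_det A).1 hA
    exact hdet.ne_zero (Matrix.det_eq_zero_of_row_eq_zero i (congrFun (hinj h0)))
  -- The erased rows are the first coordinates of `E`, so there are fewer than `k` of them.
  obtain ⟨i, hi⟩ : ∃ i, i ∉ E.image Prod.fst := by
    by_contra! hall
    have hcard : k ≤ E.card := by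
      calc k = (E.image Prod.fst).card := by
            rw [Finset.eq_univ_iff_forall.2 hall, Finset.card_univ, Fintype.card_fin]
        _ ≤ E.card := Finset.card_image_le
    omega
  have hiI : i ∈ I := by
    rw [hI]
    exact fun j hj => hi (Finset.mem_image_of_mem Prod.fst hj)
  refine ⟨⟨i, hiI⟩, fun i _ => hmem i, fun W hW hrows => ?_⟩
  by_contra hWU
  have h0 : (A * M) i ∈ W ⊓ U := ⟨hrows i hiI, hmem i⟩
  rw [hint W hW U hU hWU, Submodule.mem_bot] at h0
  exact hne i h0

end
end

section
/- Let q be a prime power, p a monic irreducible polynomial of degree k over F_q with companion matrix P, m ≥ 1 and n = mk. Let U, V ∈ F_q^{k×n} be basis matrices of codewords of the Desarguesian spread S_q(m,k,P), i.e., matrices of the block form (0 | … | 0 | I_k | B_{i+1} | … | B_m) with all blocks B_j ∈ F_q[P]. Let A, A' ∈ GL_k(F_q) and let S ⊆ {1,…,n} be a set of at most k−1 column indices. If the matrices AU and A'V agree in every column outside S, then rowsp(U) = rowsp(V). (That is, in the column erasure channel the Desarguesian spread can correct any erasure pattern with at most k−1 erased columns.) -/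
/-! Since `A U - A' V` vanishes outside at most `k - 1` columns, its `k` rows are linearly dependent:
some nonzero `x` satisfies `(x A) U = (x A') V`, a nonzero vector common to both row spaces. It
remains to see that distinct codewords intersect trivially. The leftmost nonzero block of the common
vector is the coefficient vector at the pivot block, so the pivots coincide and `x A = x A' =: a`;
then `a (B_j - C_j) = 0` for all `j`. The companion matrix `P` represents multiplication by the root
on `F[X]/(p)` in the power basis, so `F[P]` consists of multiplication matrices of elements of a
field; hence `B_j - C_j` is zero or invertible (`matAlg_vecMul_injective`), and `a ≠ 0` forces
`B_j = C_j`. -/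

open Matrix Polynomial

noncomputable section

theorem companionMatrix_eq_leftMulMatrix {F : Type*} [Field F] (p : Polynomial F)
    (hmonic : p.Monic) (hirr : Irreducible p) :
    companionMatrix (k := p.natDegree) p =
      Algebra.leftMulMatrix (AdjoinRoot.powerBasis' hmonic).basis (AdjoinRoot.root p) := by
  have hpos := hirr.natDegree_pos
  have h := (AdjoinRoot.powerBasis' hmonic).leftMulMatrix
  have hm : (AdjoinRoot.powerBasis' hmonic).minpolyGen = p := by
    have : Fact (Irreducible p) := ⟨hirr⟩
    rw [PowerBasis.minpolyGen_eq, AdjoinRoot.powerBasis'_gen, AdjoinRoot.minpoly_root hirr.ne_zero,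
      hmonic.leadingCoeff, inv_one, C_1, mul_one]
  rw [hm] at h
  rw [← AdjoinRoot.powerBasis'_gen hmonic]
  refine Eq.trans ?_ h.symm
  ext i j
  have : (j : ℕ) = p.natDegree - 1 ↔ (j : ℕ) + 1 = p.natDegree := by omega
  simp only [companionMatrix, Matrix.of_apply, this, AdjoinRoot.powerBasis'_dim]
  rfl

theorem matAlg_subset_range_leftMulMatrix {F : Type*} [Field F] (p : Polynomial F)
    (hmonic : p.Monic) (hirr : Irreducible p) {B : Matrix (Fin p.natDegree) (Fin p.natDegree) F}
    (hB : B ∈ matAlg (companionMatrix (k := p.natDegree) p)) :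
    ∃ z : AdjoinRoot p, B = Algebra.leftMulMatrix (AdjoinRoot.powerBasis' hmonic).basis z := by
  obtain ⟨v, rfl⟩ := hB
  refine ⟨∑ i, v i • AdjoinRoot.root p ^ (i : ℕ), ?_⟩
  rw [companionMatrix_eq_leftMulMatrix p hmonic hirr, map_sum]
  refine Finset.sum_congr rfl fun i _ => ?_
  rw [map_smul, map_pow]
  rfl

theorem vecMul_ne_zero_of_isUnit {F : Type*} [Field F] {k : ℕ} {A : Matrix (Fin k) (Fin k) F}
    (hA : IsUnit A) {x : Fin k → F} (hx : x ≠ 0) : x ᵥ* A ≠ 0 := fun h =>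
  hx (Matrix.vecMul_injective_of_isUnit hA (h.trans (Matrix.zero_vecMul A).symm))

/-- Two elements of `F[P]` that agree on one nonzero row vector are equal: their difference lies in
a field, so it is zero or invertible. -/
theorem matAlg_vecMul_injective {F : Type*} [Field F] {k : ℕ} (p : Polynomial F)
    (hmonic : p.Monic) (hirr : Irreducible p) (hdeg : p.natDegree = k)
    {B C : Matrix (Fin k) (Fin k) F}
    (hB : B ∈ matAlg (companionMatrix (k := k) p)) (hC : C ∈ matAlg (companionMatrix (k := k) p))
    {a : Fin k → F} (ha : a ≠ 0) (h : a ᵥ* B = a ᵥ* C) : B = C := by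
  subst hdeg
  have : Fact (Irreducible p) := ⟨hirr⟩
  obtain ⟨y, rfl⟩ := matAlg_subset_range_leftMulMatrix p hmonic hirr hB
  obtain ⟨z, rfl⟩ := matAlg_subset_range_leftMulMatrix p hmonic hirr hC
  by_contra hne
  have hyz : y - z ≠ 0 := sub_ne_zero.2 fun e => hne (by rw [e])
  have h0 : a ᵥ* Algebra.leftMulMatrix (AdjoinRoot.powerBasis' hmonic).basis (y - z) = 0 := by
    rw [map_sub]
    exact (Matrix.vecMul_sub _ _ _).trans (sub_eq_zero.2 h)
  have hunit := (IsUnit.mk0 _ hyz).map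
    (Algebra.leftMulMatrix (AdjoinRoot.powerBasis' hmonic).basis)
  exact vecMul_ne_zero_of_isUnit hunit ha h0

/-- A matrix whose nonzero columns number fewer than its rows has a nontrivial left kernel. -/
theorem exists_vecMul_eq_zero_of_columns {F : Type*} [Field F] {k : ℕ} {n : Type*}
    (D : Matrix (Fin k) n F) (S : Finset n) (hS : S.card < k)
    (hD : ∀ col ∉ S, ∀ row, D row col = 0) : ∃ x : Fin k → F, x ≠ 0 ∧ x ᵥ* D = 0 := by
  let D' : Matrix (Fin k) S F := D.submatrix id Subtype.val
  have hker : LinearMap.ker D'.vecMulLinear ≠ ⊥ :=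
    LinearMap.ker_ne_bot_of_finrank_lt (by simpa using hS)
  obtain ⟨x, hx, hx0⟩ := (Submodule.ne_bot_iff _).1 hker
  refine ⟨x, hx0, funext fun c => ?_⟩
  by_cases hc : c ∈ S
  · exact congrFun (LinearMap.mem_ker.1 hx) ⟨c, hc⟩
  · simp [Matrix.vecMul, dotProduct, hD c hc]

/-- Distinct spread codewords intersect trivially. -/
theorem spread_eq_of_common_vector {F : Type*} [Field F] {k m : ℕ} (p : Polynomial F)
    (hmonic : p.Monic) (hirr : Irreducible p) (hdeg : p.natDegree = k)
    {U V : Matrix (Fin k) (Fin m × Fin k) F}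
    (hU : IsSpreadMat (companionMatrix (k := k) p) U)
    (hV : IsSpreadMat (companionMatrix (k := k) p) V)
    {a b : Fin k → F} (ha : a ≠ 0) (hb : b ≠ 0) (h : a ᵥ* U = b ᵥ* V) : U = V := by
  obtain ⟨i, B, hB0, hB1, hB, rfl⟩ := hU
  obtain ⟨i', C, hC0, hC1, hC, rfl⟩ := hV
  have hblock : ∀ j, a ᵥ* B j = b ᵥ* C j := fun j => funext fun c => congrFun h (j, c)
  obtain hlt | rfl | hlt := lt_trichotomy i i'
  · exact absurd (by simpa [hB1, hC0 i hlt] using hblock i) ha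
  · obtain rfl : a = b := by simpa [hB1, hC1] using hblock i
    have : B = C := funext fun j => by
      obtain hj | rfl | hj := lt_trichotomy j i
      · rw [hB0 j hj, hC0 j hj]
      · rw [hB1, hC1]
      · exact matAlg_vecMul_injective p hmonic hirr hdeg (hB j hj) (hC j hj) ha (hblock j)
    rw [this]
  · exact absurd (by simpa [hC1, hB0 i' hlt] using (hblock i').symm) hb

/-- In the column erasure channel, the Desarguesian spread
`S_q(m,k,P)` corrects any erasure pattern with at most `k-1` erased columns: if
`U, V` are basis matrices of spread codewords, `A, A'` are invertible, and `A·U`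
and `A'·V` agree in every column outside a set `S` of at most `k-1` columns,
then `rowsp(U) = rowsp(V)`. -/
theorem desSpread_CEC_correction (F : Type*) [Field F] (k m : ℕ) (hm : 1 ≤ m)
    (p : Polynomial F) (hmonic : p.Monic) (hirr : Irreducible p)
    (hdeg : p.natDegree = k)
    (U V : Matrix (Fin k) (Fin m × Fin k) F)
    (hU : IsSpreadMat (companionMatrix (k := k) p) U)
    (hV : IsSpreadMat (companionMatrix (k := k) p) V)
    (A A' : Matrix (Fin k) (Fin k) F) (hA : IsUnit A) (hA' : IsUnit A')
    (S : Finset (Fin m × Fin k)) (hS : S.card ≤ k - 1)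
    (hagree : ∀ col ∉ S, ∀ row : Fin k, (A * U) row col = (A' * V) row col) :
    rowSpace U = rowSpace V := by
  have hk : 0 < k := hdeg ▸ hirr.natDegree_pos
  obtain ⟨x, hx, hxD⟩ := exists_vecMul_eq_zero_of_columns (A * U - A' * V) S (by omega)
    fun col hcol row => sub_eq_zero.2 (hagree col hcol row)
  rw [Matrix.vecMul_sub, sub_eq_zero, ← Matrix.vecMul_vecMul, ← Matrix.vecMul_vecMul] at hxD
  rw [spread_eq_of_common_vector p hmonic hirr hdeg hU hV (vecMul_ne_zero_of_isUnit hA hx)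
    (vecMul_ne_zero_of_isUnit hA' hx) hxD]

end
end

section
/- Fix integers q ≥ 2 and m ≥ 1. For k ≥ 1 let N(k) := 2^{k²} − (2^k − 1)^k and let e_avg(k) := (N(k)^m/(q^{mk} − 1))·(q^{mk} − ((q^k − 1)(N(k) − 1)/N(k) + 1)^m), regarded as a real number. Then the limit as k → ∞ of e_avg(k)/(m·N(k)^{m−1}) equals 1. -/
/-!
Write `Q = q ^ k`, `N = N(k)` and `x = (1 - 1/Q) / N`. The inner base of `e_avg(k)` is
`(Q - 1)(N - 1)/N + 1 = Q (1 - x)`, so the second factor is `Q ^ m (1 - (1 - x) ^ m)`, and the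
geometric sum `1 - (1 - x) ^ m = x ∑_{i < m} (1 - x) ^ i` gives the exact identity
`e_avg(k) / (m N ^ (m - 1)) = (1 - Q⁻¹) / (1 - Q⁻ᵐ) · (∑_{i < m} (1 - x) ^ i) / m`
(`eAvg_ratio_eq`). Both `Q` and `N` tend to infinity, the latter because `N(k) ≥ 2 ^ k` for
`k ≥ 2` (`two_pow_le_NblkR`), so `x → 0`, the sum tends to `m`, and the whole tends to `1`.
-/

open Filter

/-- `N(k) = 2^{k²} - (2^k - 1)^k`, as a real number. -/
noncomputable def NblkR (k : ℕ) : ℝ := 2 ^ k ^ 2 - (2 ^ k - 1) ^ k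

/-- The average number of correctable symbol erasure patterns of a Desarguesian
spread code in `G_q(k, mk)` over the column erasure channel:
`e_avg(k) = (N(k)^m/(q^{mk}-1))·(q^{mk} - ((q^k-1)(N(k)-1)/N(k) + 1)^m)`. -/
noncomputable def eAvgR (q m k : ℕ) : ℝ :=
  NblkR k ^ m / ((q : ℝ) ^ (m * k) - 1) *
    ((q : ℝ) ^ (m * k) - (((q : ℝ) ^ k - 1) * (NblkR k - 1) / NblkR k + 1) ^ m)

/-- With `a = 2 ^ k`, this is `a ^ k - (a - 1) ^ k ≥ a ^ k - (a - 1) a ^ (k - 1) = a ^ (k - 1) ≥ a`. -/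
lemma two_pow_le_NblkR {k : ℕ} (hk : 2 ≤ k) : (2 : ℝ) ^ k ≤ NblkR k := by
  obtain ⟨j, rfl⟩ := Nat.exists_eq_add_of_le' hk
  unfold NblkR
  rw [sq, pow_mul]
  generalize ha : (2 : ℝ) ^ (j + 2) = a
  have h1 : 1 ≤ a := ha ▸ one_le_pow₀ (by norm_num)
  have h2 : (a - 1) ^ (j + 1) ≤ a ^ (j + 1) :=
    pow_le_pow_left₀ (by linarith) (by linarith) _
  have h3 : a ≤ a ^ (j + 1) := le_self_pow₀ h1 (by lia)
  have h4 : (a - 1) ^ (j + 1) * (a - 1) ≤ a ^ (j + 1) * (a - 1) :=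
    mul_le_mul_of_nonneg_right h2 (by linarith)
  rw [pow_succ a (j + 1), pow_succ (a - 1) (j + 1)]
  linarith

lemma tendsto_NblkR : Tendsto NblkR atTop atTop :=
  tendsto_atTop_mono' _
    ((eventually_ge_atTop 2).mono fun _ hk => two_pow_le_NblkR hk)
    (tendsto_pow_atTop_atTop_of_one_lt (by norm_num))

/-- The exact form of the ratio, in which every term has an evident limit. -/
lemma eAvg_ratio_eq {Q N : ℝ} (hQ : 1 < Q) (hN : 0 < N) (n : ℕ) :
    N ^ (n + 1) / (Q ^ (n + 1) - 1) * (Q ^ (n + 1) - ((Q - 1) * (N - 1) / N + 1) ^ (n + 1)) /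
        (((n + 1 : ℕ) : ℝ) * N ^ n) =
      (1 - Q⁻¹) / (1 - Q⁻¹ ^ (n + 1)) *
        ((∑ i ∈ Finset.range (n + 1), (1 - (1 - Q⁻¹) * N⁻¹) ^ i) / ((n + 1 : ℕ) : ℝ)) := by
  have hQ0 : Q ≠ 0 := by positivity
  have hbase : (Q - 1) * (N - 1) / N + 1 = Q * (1 - (1 - Q⁻¹) * N⁻¹) := by
    field_simp
    ring
  have hgeom := mul_neg_geom_sum (1 - (1 - Q⁻¹) * N⁻¹) (n + 1)
  have hm : ((n + 1 : ℕ) : ℝ) ≠ 0 := by positivity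
  have hQm : Q ^ (n + 1) - 1 ≠ 0 := (sub_pos.2 (one_lt_pow₀ hQ (by lia))).ne'
  have hden : 1 - Q⁻¹ ^ (n + 1) = (Q ^ (n + 1) - 1) / Q ^ (n + 1) := by
    rw [inv_pow]
    field_simp
  rw [hbase, mul_pow, ← mul_one_sub, ← hgeom, hden]
  generalize ∑ i ∈ Finset.range (n + 1), (1 - (1 - Q⁻¹) * N⁻¹) ^ i = S
  generalize ((n + 1 : ℕ) : ℝ) = M at *
  rw [sub_sub_cancel, pow_succ N]
  generalize hP : Q ^ (n + 1) = P at *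
  have hP0 : P ≠ 0 := hP ▸ pow_ne_zero _ hQ0
  field_simp

/-- For fixed `q ≥ 2` and `m ≥ 1`,
`lim_{k→∞} e_avg(k)/(m·N(k)^{m-1}) = 1`. -/
theorem eAvg_asymptotics (q m : ℕ) (hq : 2 ≤ q) (hm : 1 ≤ m) :
    Tendsto (fun k : ℕ => eAvgR q m k / ((m : ℝ) * NblkR k ^ (m - 1)))
      atTop (nhds 1) := by
  obtain ⟨n, rfl⟩ := Nat.exists_eq_add_of_le' hm
  have hq1 : (1 : ℝ) < q := by exact_mod_cast hq
  have hm0 : ((n + 1 : ℕ) : ℝ) ≠ 0 := by positivity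
  have ht : Tendsto (fun k : ℕ => ((q : ℝ) ^ k)⁻¹) atTop (nhds 0) :=
    (tendsto_pow_atTop_atTop_of_one_lt hq1).inv_tendsto_atTop
  have hs : Tendsto (fun k : ℕ => (NblkR k)⁻¹) atTop (nhds 0) :=
    tendsto_NblkR.inv_tendsto_atTop
  have h1t := ht.const_sub 1
  have hx := (h1t.mul hs).const_sub 1
  have hsum := (tendsto_finsetSum (Finset.range (n + 1)) fun i _ => hx.pow i).div_const
    ((n + 1 : ℕ) : ℝ)
  have hfac := h1t.div ((ht.pow (n + 1)).const_sub 1) (by simp)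
  have hlim := hfac.mul hsum
  simp only [sub_zero, mul_zero, one_pow, Finset.sum_const, Finset.card_range, nsmul_eq_mul,
    mul_one, ne_eq, Nat.add_eq_zero_iff, one_ne_zero, and_false, not_false_eq_true, zero_pow,
    div_self hm0, div_one] at hlim
  refine hlim.congr' ?_
  filter_upwards [eventually_ge_atTop 2] with k hk
  have hN : 0 < NblkR k := lt_of_lt_of_le (by positivity) (two_pow_le_NblkR hk)
  have hQ : (1 : ℝ) < (q : ℝ) ^ k := one_lt_pow₀ hq1 (by lia)
  have h := eAvg_ratio_eq hQ hN n
  unfold eAvgR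
  rw [Nat.add_sub_cancel, mul_comm (n + 1) k, pow_mul]
  exact h.symm
end
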